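/- (Theorem on curves/low dimension, torus case.) Let K be an algebraically closed field of characteristic p > 0, let X be a subvariety of (Kˣ)² with X ≠ (Kˣ)² (so X has dimension at most 1), and let Γ be a finitely generated subgroup of (Kˣ)². Then X ∩ Γ is a finite union of F-sets in Γ, i.e., of sets of the form S·B where S is a groupless F-set in Γ and B is a subgroup of Γ. -/

import Mathlib

/-- `X` is a subvariety of the torus `(Kˣ)²`: the common zero set in `(Kˣ)²` of a
family of polynomials in two variables over `K`. -/
def IsTorusSubvariety₂ (K : Type*) [Field K] (X : Set (Kˣ × Kˣ)) : Prop :=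
  ∃ 𝒮 : Set (MvPolynomial (Fin 2) K),
    X = {g : Kˣ × Kˣ | ∀ f ∈ 𝒮, MvPolynomial.eval ![(g.1 : K), (g.2 : K)] f = 0}

/-- `S` is a groupless `F`-set in the subgroup `Γ` of `(Kˣ)²`: a subset of `Γ` of the
form `{α₀ · ∏_{i=1}^r F_q^{k·n_i}(α_i) : n_1, …, n_r ∈ ℕ}` for some `r ≥ 0`, `k ≥ 1`,
a power `q = p^a` of `p`, and `α₀, …, α_r ∈ (Kˣ)²`, where `F_q : x ↦ x^q` is the
`q`-power Frobenius of the torus. -/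
def IsGrouplessFSet₂ {K : Type*} [Field K] (p : ℕ)
    (Γ : Subgroup (Kˣ × Kˣ)) (S : Set (Kˣ × Kˣ)) : Prop :=
  S ⊆ ↑Γ ∧ ∃ (a : ℕ), 1 ≤ a ∧ ∃ (r k : ℕ), 1 ≤ k ∧
    ∃ (α₀ : Kˣ × Kˣ) (α : Fin r → Kˣ × Kˣ),
      S = {g | ∃ n : Fin r → ℕ, g = α₀ * ∏ i : Fin r, (α i) ^ ((p ^ a) ^ (k * n i))}

/-- `T` is an `F`-set in `Γ`: a set of the form `S·B` where `S` is a groupless `F`-set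
in `Γ` and `B` is a subgroup of `Γ`. -/
def IsFSet₂ {K : Type*} [Field K] (p : ℕ)
    (Γ : Subgroup (Kˣ × Kˣ)) (T : Set (Kˣ × Kˣ)) : Prop :=
  ∃ (S : Set (Kˣ × Kˣ)) (B : Subgroup (Kˣ × Kˣ)),
    IsGrouplessFSet₂ p Γ S ∧ B ≤ Γ ∧ T = {g | ∃ s ∈ S, ∃ b ∈ B, g = s * b}

/-!
An irreducible `f = ∑ c i * χ i`, with characters `χ i`, is rigid on the torus: a polynomial in
the same monomials that is not a scalar multiple of `f` has only finitely many common zeros with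
it. Write `Γ` as the union of finitely many cosets `γ * Γ ^ q`, with `q` a power of `p`. On each
of them the zeros of `f` are the image under `y ↦ γ * y ^ q` of the zeros of a sum whose
coefficients are `q`-th roots of the `c i * χ i γ`. By rigidity a sum with infinitely many zeros
in `Γ` has its coefficients in the finitely generated field `L` generated by the values of the
`χ i` on `Γ`, and since taking roots contracts all homomorphisms `Lˣ → ℤ`, iterating this descent
meets only finitely many such sums. The descent therefore ends in sums with finitely many zeros or
in loops, where a sum reproduces itself under `σ y = g * y ^ q`. On a loop, `Γ` being finitely
generated, only finitely many zeros lie outside the image of `σ` or in all iterated images of `σ`,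
so the zeros form finitely many `σ`-orbits and finitely many points. Translating a fixed point of
`σ` to `1` shows that each orbit is a groupless `F`-set.

This needs the differences of the exponents of `f` to span the plane. Otherwise the zeros of `f`
are a union of finitely many fibres of a single character, whose traces on `Γ` are cosets.
-/

/-- The set `T` is a union of finitely many members of the class `P`. -/
def IsFiniteUnionOf {α : Type*} (P : Set α → Prop) (T : Set α) : Prop :=
  ∃ 𝒯 : Set (Set α), 𝒯.Finite ∧ (∀ S ∈ 𝒯, P S) ∧ ⋃₀ 𝒯 = T

namespace IsFiniteUnionOf

variable {α β ι : Type*} {P : Set α → Prop} {S T : Set α}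

theorem single (hT : P T) : IsFiniteUnionOf P T :=
  ⟨{T}, Set.finite_singleton T, fun _ hS => hS ▸ hT, Set.sUnion_singleton T⟩

theorem biUnion {s : Set ι} (hs : s.Finite) {T : ι → Set α}
    (hT : ∀ i ∈ s, IsFiniteUnionOf P (T i)) : IsFiniteUnionOf P (⋃ i ∈ s, T i) := by
  choose! 𝒯 hfin hmem hunion using hT
  refine ⟨⋃ i ∈ s, 𝒯 i, hs.biUnion hfin, fun S hS => ?_, ?_⟩
  · obtain ⟨i, hi, hS⟩ := Set.mem_iUnion₂.1 hS
    exact hmem i hi S hS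
  · simp only [Set.sUnion_iUnion]
    exact Set.iUnion₂_congr hunion

theorem union (hS : IsFiniteUnionOf P S) (hT : IsFiniteUnionOf P T) :
    IsFiniteUnionOf P (S ∪ T) := by
  obtain ⟨𝒮, hSfin, hS, rfl⟩ := hS
  obtain ⟨𝒯, hTfin, hT, rfl⟩ := hT
  exact ⟨𝒮 ∪ 𝒯, hSfin.union hTfin, fun _ => Or.rec (hS _) (hT _), Set.sUnion_union 𝒮 𝒯⟩

theorem of_finite (hT : T.Finite) (h : ∀ x ∈ T, P {x}) : IsFiniteUnionOf P T := by
  rw [← Set.biUnion_of_singleton T]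
  exact biUnion hT fun x hx => single (h x hx)

theorem image {Q : Set β → Prop} {f : α → β} (hT : IsFiniteUnionOf P T)
    (h : ∀ S, P S → Q (f '' S)) : IsFiniteUnionOf Q (f '' T) := by
  obtain ⟨𝒯, hfin, hmem, rfl⟩ := hT
  refine ⟨Set.image f '' 𝒯, hfin.image _, ?_, (Set.image_sUnion).symm⟩
  rintro _ ⟨S, hS, rfl⟩
  exact h S (hmem S hS)

theorem mono {Q : Set α → Prop} (hT : IsFiniteUnionOf P T) (h : ∀ S, P S → Q S) :
    IsFiniteUnionOf Q T := by
  obtain ⟨𝒯, hfin, hmem, hT⟩ := hT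
  exact ⟨𝒯, hfin, fun S hS => h S (hmem S hS), hT⟩

theorem exists_fin (hT : IsFiniteUnionOf P T) :
    ∃ (n : ℕ) (S : Fin n → Set α), (∀ i, P (S i)) ∧ T = ⋃ i, S i := by
  obtain ⟨𝒯, hfin, hmem, rfl⟩ := hT
  have := hfin.to_subtype
  obtain ⟨n, ⟨e⟩⟩ := Finite.exists_equiv_fin 𝒯
  refine ⟨n, fun i => e.symm i, fun i => hmem _ (e.symm i).2, ?_⟩
  rw [Set.sUnion_eq_iUnion]
  exact (e.symm.iSup_comp (g := fun S : 𝒯 => (S : Set α))).symm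

end IsFiniteUnionOf

theorem induction_on_finite_graph {α : Type*} {r : α → α → Prop} {P : α → Prop} {D : Set α}
    (hD : D.Finite) (hclosed : ∀ a ∈ D, ∀ b, r a b → b ∈ D ∨ P b)
    (hcycle : ∀ a ∈ D, Relation.TransGen r a a → P a)
    (hstep : ∀ a ∈ D, (∀ b, r a b → P b) → P a) : ∀ a ∈ D, P a := by
  let Bad := {a // a ∈ D ∧ ¬P a}
  have : Finite Bad := hD.sep _
  let s : Bad → Bad → Prop := fun a b => Relation.TransGen r b a
  have : IsTrans Bad s := ⟨fun _ _ _ h h' => h'.trans h⟩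
  have : Std.Irrefl s := ⟨fun a h => a.2.2 (hcycle a a.2.1 h)⟩
  have hwf := Finite.wellFounded_of_trans_of_irrefl s
  have hbad : Bad → False := fun a => hwf.induction a fun a ih =>
    a.2.2 <| hstep a a.2.1 fun b hab => by
      by_contra hb
      exact ih ⟨b, (hclosed a a.2.1 b hab).resolve_right hb, hb⟩ (Relation.TransGen.single hab)
  exact fun a ha => by_contra fun hPa => hbad ⟨a, ha, hPa⟩

theorem eq_iInter_image_iterate_union_biUnion_range_iterate {α : Type*} {σ : α → α} {Z : Set α}
    (hσ : Set.MapsTo σ Z Z) :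
    Z = (⋂ n, σ^[n] '' Z) ∪ ⋃ x ∈ Z \ σ '' Z, Set.range fun n => σ^[n] x := by
  refine Set.Subset.antisymm (fun x hx => ?_) (Set.union_subset ?_ (Set.iUnion₂_subset ?_))
  · refine or_iff_not_imp_left.2 fun hnot => ?_
    have hex : ∃ n, x ∉ σ^[n] '' Z := by simpa only [Set.mem_iInter, not_forall] using hnot
    classical
    obtain ⟨n, hn⟩ := Nat.exists_eq_succ_of_ne_zero (n := Nat.find hex) fun h =>
      (h ▸ Nat.find_spec hex) ⟨x, hx, rfl⟩
    obtain ⟨y, hy, hyx⟩ := not_not.1 (Nat.find_min hex (hn ▸ n.lt_succ_self))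
    refine Set.mem_iUnion₂.2 ⟨y, ⟨hy, ?_⟩, n, hyx⟩
    rintro ⟨z, hz, rfl⟩
    exact Nat.find_spec hex ⟨z, hz, by rw [hn, Function.iterate_succ_apply, hyx]⟩
  · exact (Set.iInter_subset _ 0).trans (Set.image_id Z).subset
  · rintro x ⟨hx, -⟩ _ ⟨n, rfl⟩
    exact hσ.iterate n hx

/-! ### Finitely generated abelian groups -/

/-- The dual of a finitely generated module is Noetherian, so finitely many linear forms on `M`
span the restrictions to `N` of all of them. -/
theorem exists_finite_dual_forall_eq_zero {R M : Type*} [CommRing R] [IsNoetherianRing R]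
    [AddCommGroup M] [Module R M] {N : Submodule R M} (hN : N.FG) :
    ∃ t : Set (Module.Dual R M), t.Finite ∧
      ∀ x ∈ N, (∀ f ∈ t, f x = 0) → ∀ f : Module.Dual R M, f x = 0 := by
  have := Module.Finite.iff_fg.2 hN
  obtain ⟨s, hs, hspan⟩ := Submodule.fg_def.1
    (IsNoetherian.noetherian (LinearMap.range N.dualRestrict))
  have hlift : ∀ g ∈ s, ∃ f, N.dualRestrict f = g := fun g hg =>
    LinearMap.mem_range.1 (hspan ▸ Submodule.subset_span hg)
  choose! lift hlift using hlift
  refine ⟨lift '' s, hs.image lift, fun x hx hzero f => ?_⟩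
  have hker : LinearMap.range N.dualRestrict ≤
      LinearMap.ker (Module.Dual.eval R N ⟨x, hx⟩) := by
    rw [← hspan, Submodule.span_le]
    intro g hg
    have := hzero (lift g) ⟨g, hg, rfl⟩
    rwa [← hlift g hg]
  exact hker ⟨f, rfl⟩

section Groups

variable {A : Type*} [CommGroup A] {Γ : Subgroup A}

theorem pow_pow_injective {q : ℕ} (hq : Function.Injective fun x : A => x ^ q) (n : ℕ) :
    Function.Injective fun x : A => x ^ q ^ n := by
  simpa only [pow_iterate] using hq.iterate n

theorem exists_mem_zpowers_pow_eq_of_isOfFinOrder {q : ℕ}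
    (hq : Function.Injective fun x : A => x ^ q) {t : A} (ht : IsOfFinOrder t) :
    ∃ s ∈ Subgroup.zpowers t, s ^ q = t := by
  have : Finite (Subgroup.zpowers t) := ht.finite_zpowers
  have hinj : Function.Injective fun x : Subgroup.zpowers t => x ^ q := fun x y hxy =>
    Subtype.ext (hq (congrArg Subtype.val hxy))
  obtain ⟨s, hs⟩ := Finite.surjective_of_injective hinj ⟨t, Subgroup.mem_zpowers t⟩
  exact ⟨s, s.2, congrArg Subtype.val hs⟩

theorem finite_setOf_isOfFinOrder_of_fg (hΓ : Γ.FG) : {x ∈ Γ | IsOfFinOrder x}.Finite := by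
  have := (Group.fg_iff_subgroup_fg Γ).2 hΓ
  have : Module.Finite ℤ (Additive Γ) := Module.Finite.iff_addGroup_fg.2 inferInstance
  have htorsion : (CommGroup.torsion Γ).FG := (Subgroup.fg_iff_add_fg _).2 <|
    (Submodule.fg_iff_addSubgroup_fg
      (AddSubgroup.toIntSubmodule (Subgroup.toAddSubgroup (CommGroup.torsion Γ)))).1
      (IsNoetherian.noetherian _)
  have := (Group.fg_iff_subgroup_fg _).2 htorsion
  have := CommGroup.finite_of_fg_isMulTorsion (CommGroup.torsion Γ) CommMonoid.torsion.isMulTorsion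
  refine (Set.finite_range fun x : CommGroup.torsion Γ => ((x : Γ) : A)).subset ?_
  rintro x ⟨hx, hfin⟩
  exact ⟨⟨⟨x, hx⟩, Submonoid.isOfFinOrder_coe.1 hfin⟩, rfl⟩

theorem finite_setOf_isOfFinOrder_mul_pow (hΓ : Γ.FG) (g : A) {k : ℕ} (hk : k ≠ 0) :
    {x ∈ Γ | IsOfFinOrder (g * x ^ k)}.Finite := by
  obtain hempty | ⟨x₀, hx₀, hfin₀⟩ := {x ∈ Γ | IsOfFinOrder (g * x ^ k)}.eq_empty_or_nonempty
  · exact hempty ▸ Set.finite_empty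
  refine ((finite_setOf_isOfFinOrder_of_fg hΓ).image (x₀ * ·)).subset ?_
  rintro x ⟨hx, hfin⟩
  refine ⟨x₀⁻¹ * x, ⟨Γ.mul_mem (Γ.inv_mem hx₀) hx, ?_⟩, mul_inv_cancel_left x₀ x⟩
  have hpow : (x₀⁻¹ * x) ^ k = (g * x₀ ^ k)⁻¹ * (g * x ^ k) := by
    rw [mul_pow, inv_pow, mul_inv, mul_mul_mul_comm, inv_mul_cancel, one_mul]
  exact (isOfFinOrder_pow.1 (hpow ▸ hfin₀.inv.mul hfin)).resolve_right hk

/-- Krull's intersection theorem for the ideal `(q)` of `ℤ`. -/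
theorem isOfFinOrder_of_forall_exists_pow_pow_eq (hΓ : Γ.FG) {q : ℕ} (hq : 1 < q) {x : A}
    (hx : ∀ n : ℕ, ∃ y ∈ Γ, y ^ q ^ n = x) : IsOfFinOrder x := by
  have := (Group.fg_iff_subgroup_fg Γ).2 hΓ
  have : Module.Finite ℤ (Additive Γ) := Module.Finite.iff_addGroup_fg.2 inferInstance
  choose y hy hyx using hx
  have hxΓ : x ∈ Γ := by simpa using hyx 0 ▸ Γ.pow_mem (hy 0) _
  have hmem : Additive.ofMul (⟨x, hxΓ⟩ : Γ) ∈
      (⨅ i : ℕ, Ideal.span {(q : ℤ)} ^ i • ⊤ : Submodule ℤ (Additive Γ)) := by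
    refine Submodule.mem_iInf _ |>.2 fun n => ?_
    have hmul : ((q : ℤ) ^ n) • Additive.ofMul (⟨y n, hy n⟩ : Γ) = Additive.ofMul ⟨x, hxΓ⟩ := by
      rw [← ofMul_zpow]
      exact congrArg Additive.ofMul (Subtype.ext (by simpa using mod_cast hyx n))
    rw [← hmul]
    exact Submodule.smul_mem_smul
      (Ideal.pow_mem_pow (Ideal.mem_span_singleton_self _) n) Submodule.mem_top
  obtain ⟨⟨r, hr⟩, hrx⟩ := (Ideal.mem_iInf_smul_pow_eq_bot_iff _ _).1 hmem
  obtain ⟨k, rfl⟩ := Ideal.mem_span_singleton'.1 hr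
  have hne : k * q - 1 ≠ 0 := fun h => by
    have := Int.isUnit_iff.1 (IsUnit.of_mul_eq_one_right k (sub_eq_zero.1 h))
    omega
  refine isOfFinOrder_iff_zpow_eq_one.2 ⟨k * q - 1, hne, ?_⟩
  have hz : x ^ (k * q : ℤ) = x := congrArg (fun z : Additive Γ => (z.toMul : A)) hrx
  rw [zpow_sub_one, hz, mul_inv_cancel]

theorem exists_finite_subset_forall_eq_mul_pow (hΓ : Γ.FG) {q : ℕ} (hq : q ≠ 0) :
    ∃ R : Set A, R.Finite ∧ R ⊆ Γ ∧ ∀ x ∈ Γ, ∃ γ ∈ R, ∃ y ∈ Γ, x = γ * y ^ q := by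
  have := (Group.fg_iff_subgroup_fg Γ).2 hΓ
  have := Subgroup.finiteIndex_range_powMonoidHom_of_fg Γ hq
  let r : Γ ⧸ (powMonoidHom q : Γ →* Γ).range → A := fun z => (z.out : Γ)
  refine ⟨Set.range r, Set.finite_range r, ?_, fun x hx => ?_⟩
  · rintro _ ⟨z, rfl⟩
    exact z.out.2
  · obtain ⟨⟨_, y, rfl⟩, hy⟩ := QuotientGroup.mk_out_eq_mul
      (powMonoidHom q : Γ →* Γ).range ⟨x, hx⟩
    refine ⟨_, ⟨QuotientGroup.mk ⟨x, hx⟩, rfl⟩, y⁻¹, Γ.inv_mem y.2, ?_⟩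
    simp only [r, hy, powMonoidHom_apply, Subgroup.coe_mul, Subgroup.coe_pow, inv_pow,
      mul_inv_cancel_right]

theorem exists_finite_hom_forall_isOfFinOrder
    (hA : ∀ x : A, (∀ φ : A →* Multiplicative ℤ, φ x = 1) → IsOfFinOrder x) (hΓ : Γ.FG) :
    ∃ t : Set (A →* Multiplicative ℤ), t.Finite ∧
      ∀ x ∈ Γ, (∀ φ ∈ t, φ x = 1) → IsOfFinOrder x := by
  have hN : (AddSubgroup.toIntSubmodule (Subgroup.toAddSubgroup Γ)).FG :=
    (Submodule.fg_iff_addSubgroup_fg _).2 ((Subgroup.fg_iff_add_fg Γ).1 hΓ)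
  obtain ⟨t, ht, hzero⟩ := exists_finite_dual_forall_eq_zero hN
  let toHom (f : Module.Dual ℤ (Additive A)) : A →* Multiplicative ℤ :=
    AddMonoidHom.toMultiplicativeRight f.toAddMonoidHom
  refine ⟨toHom '' t, ht.image toHom, fun x hx hone => hA x fun φ => ?_⟩
  exact hzero (Additive.ofMul x) hx (fun f hf => hone _ ⟨f, hf, rfl⟩)
    (MonoidHom.toAdditiveLeft φ).toIntLinearMap

theorem mem_of_isOfFinOrder_of_pow_mem {n : ℕ} (hn : Function.Injective fun x : A => x ^ n)
    {x : A} (hfin : IsOfFinOrder x) (hx : x ^ n ∈ Γ) : x ∈ Γ := by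
  obtain ⟨s, hs, hsx⟩ := exists_mem_zpowers_pow_eq_of_isOfFinOrder hn (hfin.pow (n := n))
  exact hn hsx ▸ (Subgroup.zpowers_le.2 hx) hs

theorem finite_setOf_pow_mem_of_bounded {q : ℕ} (hq₀ : q ≠ 0)
    (hq : Function.Injective fun x : A => x ^ q) (hΓ : Γ.FG) {t : Set (A →* Multiplicative ℤ)}
    (ht : t.Finite) (hsep : ∀ x ∈ Γ, (∀ φ ∈ t, φ x = 1) → IsOfFinOrder x) (B : ℤ) :
    {v : A | (∃ k : ℕ, v ^ q ^ k ∈ Γ) ∧ ∀ φ ∈ t, |(φ v).toAdd| ≤ B}.Finite := by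
  have := ht.to_subtype
  apply Set.Finite.of_finite_fibers fun v (φ : t) => ((φ : A →* Multiplicative ℤ) v).toAdd
  · refine (Set.Finite.pi' fun _ => Set.finite_Icc (-B) B).subset ?_
    rintro _ ⟨v, ⟨-, hv⟩, rfl⟩
    exact fun φ => abs_le.1 (hv φ φ.2)
  · rintro _ ⟨v₀, ⟨⟨k₀, hk₀⟩, -⟩, rfl⟩
    refine ((finite_setOf_isOfFinOrder_of_fg hΓ).image (v₀ * ·)).subset ?_
    rintro v ⟨⟨⟨k, hk⟩, -⟩, hv⟩
    refine ⟨v₀⁻¹ * v, ?_, mul_inv_cancel_left v₀ v⟩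
    have hmem : (v₀⁻¹ * v) ^ q ^ (k₀ + k) ∈ Γ := by
      rw [mul_pow, inv_pow, pow_add, pow_mul, mul_comm (q ^ k₀), pow_mul v]
      exact Γ.mul_mem (Γ.inv_mem (Γ.pow_mem hk₀ _)) (Γ.pow_mem hk _)
    have hfin : IsOfFinOrder (v₀⁻¹ * v) := by
      refine (isOfFinOrder_pow.1 (hsep _ hmem fun φ hφ => ?_)).resolve_right
        (pow_ne_zero _ hq₀)
      have hval : φ v = φ v₀ := Multiplicative.toAdd.injective (congrFun hv ⟨φ, hφ⟩)
      rw [map_pow, map_mul, map_inv, hval, inv_mul_cancel, one_pow]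
    exact ⟨mem_of_isOfFinOrder_of_pow_mem (pow_pow_injective hq _) hfin hmem, hfin⟩

/-- The map `e ↦ (e * w) ^ (1 / q)` contracts every homomorphism to `ℤ`. -/
theorem exists_finite_closed_under_roots
    (hA : ∀ x : A, (∀ φ : A →* Multiplicative ℤ, φ x = 1) → IsOfFinOrder x)
    {q : ℕ} (hq₁ : 1 < q) (hq : Function.Injective fun x : A => x ^ q)
    {W : Set A} (hW : W.Finite) (u : A) :
    ∃ E : Set A, E.Finite ∧ u ∈ E ∧ ∀ e ∈ E, ∀ w ∈ W, ∀ v, v ^ q = e * w → v ∈ E := by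
  have hfin := hW.insert u
  have hsub : insert u W ⊆ Subgroup.closure (insert u W) := Subgroup.subset_closure
  have hfg : (Subgroup.closure (insert u W)).FG := (Subgroup.fg_iff _).2 ⟨_, rfl, hfin⟩
  obtain ⟨t, ht, hsep⟩ := exists_finite_hom_forall_isOfFinOrder hA hfg
  obtain ⟨B, hB⟩ := (Set.Finite.image2 (fun w (φ : A →* Multiplicative ℤ) => |(φ w).toAdd|)
    hfin ht).bddAbove
  replace hB : ∀ w ∈ insert u W, ∀ φ ∈ t, |(φ w).toAdd| ≤ B := fun w hw φ hφ =>
    hB ⟨w, hw, φ, hφ, rfl⟩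
  refine ⟨_, finite_setOf_pow_mem_of_bounded (zero_lt_one.trans hq₁).ne' hq hfg ht hsep B,
    ⟨⟨0, ?_⟩, hB u (Set.mem_insert u W)⟩, ?_⟩
  · exact Subgroup.pow_mem _ (hsub (Set.mem_insert u W)) _
  rintro e ⟨⟨k, hk⟩, he⟩ w hw v hv
  refine ⟨⟨k + 1, ?_⟩, fun φ hφ => ?_⟩
  · rw [pow_succ', pow_mul, hv, mul_pow]
    exact Subgroup.mul_mem _ hk (Subgroup.pow_mem _ (hsub (Set.mem_insert_of_mem u hw)) _)
  · have hφv : q * (φ v).toAdd = (φ e).toAdd + (φ w).toAdd := by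
      simpa using congrArg (fun x => (φ x).toAdd) hv
    have hφe := abs_le.1 (he φ hφ)
    have hφw := abs_le.1 (hB w (Set.mem_insert_of_mem u hw) φ hφ)
    have hq₂ : (2 : ℤ) ≤ q := mod_cast hq₁
    exact abs_le.2 ⟨by nlinarith [hq₂], by nlinarith [hq₂]⟩

end Groups

/-! ### Frobenius orbits -/

section FrobeniusOrbits

variable {G : Type*} [CommGroup G] {p : ℕ} {Γ : Subgroup G}

/-- `S` is a subset of `Γ` of the form `{α₀ * F^[n] α | n : ℕ}` for a positive power `F` of the
Frobenius endomorphism `x ↦ x ^ p`: a groupless `F`-set with at most one non-constant factor. -/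
def IsFrobeniusOrbit (p : ℕ) (Γ : Subgroup G) (S : Set G) : Prop :=
  S ⊆ Γ ∧ ∃ m ≠ 0, ∃ α₀ α : G, S = Set.range fun n : ℕ => α₀ * α ^ (p ^ m) ^ n

theorem isFrobeniusOrbit_singleton {x : G} (hx : x ∈ Γ) : IsFrobeniusOrbit p Γ {x} :=
  ⟨Set.singleton_subset_iff.2 hx, 1, one_ne_zero, x, 1, by
    simp only [one_pow, mul_one, Set.range_const]⟩

theorem IsFrobeniusOrbit.image {S : Set G} (hS : IsFrobeniusOrbit p Γ S) {β : G} (hβ : β ∈ Γ)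
    (Q : ℕ) : IsFrobeniusOrbit p Γ ((fun y => β * y ^ Q) '' S) := by
  obtain ⟨hSΓ, m, hm, α₀, α, rfl⟩ := hS
  refine ⟨?_, m, hm, β * α₀ ^ Q, α ^ Q, ?_⟩
  · rintro _ ⟨y, hy, rfl⟩
    exact Γ.mul_mem hβ (Γ.pow_mem (hSΓ hy) Q)
  · rw [← Set.range_comp]
    refine congrArg Set.range (funext fun n => ?_)
    simp only [Function.comp_apply, mul_pow, mul_assoc, pow_right_comm α]

theorem iterate_mul_pow_div_iterate_mul_pow (g : G) (Q n : ℕ) (x y : G) :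
    (fun y => g * y ^ Q)^[n] x / (fun y => g * y ^ Q)^[n] y = (x / y) ^ Q ^ n := by
  induction n with
  | zero => simp only [Function.iterate_zero, id_eq, pow_zero, pow_one]
  | succ n ih =>
    rw [Function.iterate_succ_apply', Function.iterate_succ_apply', mul_div_mul_left_eq_div,
      ← div_pow, ih, ← pow_mul, ← pow_succ]

/-- If `x` has preimages `y` of all orders under `σ = (g * · ^ Q)`, then `σ x / x` is divisible by
all powers of `Q`, since `σ x / x = (σ y / y) ^ Q ^ n`. -/
theorem finite_iInter_image_iterate_mul_pow (hΓ : Γ.FG) {g : G} (hg : g ∈ Γ) {Q : ℕ} (hQ : 1 < Q)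
    {Z : Set G} (hZ : Z ⊆ Γ) : (⋂ n, (fun y => g * y ^ Q)^[n] '' Z).Finite := by
  refine (finite_setOf_isOfFinOrder_mul_pow hΓ g (Nat.sub_ne_zero_of_lt hQ)).subset fun x hx => ?_
  have hx : ∀ n, x ∈ (fun y => g * y ^ Q)^[n] '' Z := Set.mem_iInter.1 hx
  obtain ⟨x', hxZ, rfl⟩ := hx 0
  refine ⟨hZ hxZ, isOfFinOrder_of_forall_exists_pow_pow_eq hΓ hQ fun n => ?_⟩
  obtain ⟨y, hy, hyx⟩ := hx n
  refine ⟨g * y ^ Q / y, Γ.div_mem (Γ.mul_mem hg (Γ.pow_mem (hZ hy) Q)) (hZ hy), ?_⟩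
  rw [← iterate_mul_pow_div_iterate_mul_pow g, hyx,
    ← Function.Commute.self_iterate (fun y => g * y ^ Q) n y, hyx, mul_div_assoc]
  exact congrArg (g * ·) (div_eq_iff_eq_mul.2 (pow_sub_one_mul (zero_lt_one.trans hQ).ne' _).symm)

/-- Over a fixed point `h⁻¹` of `σ = (g * · ^ Q)`, translation by `h` conjugates `σ` to the `Q`-th
power map. -/
theorem isFrobeniusOrbit_range_iterate_mul_pow
    (hdiv : ∀ n ≠ 0, Function.Surjective fun x : G => x ^ n) (hp : 1 < p) {m : ℕ} (hm : m ≠ 0)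
    {g x : G} (hg : g ∈ Γ) (hx : x ∈ Γ) :
    IsFrobeniusOrbit p Γ (Set.range fun n => (fun y => g * y ^ p ^ m)^[n] x) := by
  obtain ⟨h, rfl⟩ := hdiv (p ^ m - 1) (Nat.sub_ne_zero_of_lt (Nat.one_lt_pow hm hp)) g
  have hmaps : Set.MapsTo (fun y => h ^ (p ^ m - 1) * y ^ p ^ m) Γ Γ := fun y hy =>
    Γ.mul_mem hg (Γ.pow_mem hy _)
  have hsemi : Function.Semiconj (h * ·) (fun y => h ^ (p ^ m - 1) * y ^ p ^ m) (· ^ p ^ m) :=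
    fun y => by
      simp only [← mul_assoc, mul_pow, mul_pow_sub_one (pow_ne_zero m (zero_lt_one.trans hp).ne')]
  refine ⟨Set.range_subset_iff.2 fun n => hmaps.iterate n hx, m, hm, h⁻¹, h * x, ?_⟩
  refine congrArg Set.range (funext fun n => eq_inv_mul_of_mul_eq ?_)
  rw [(hsemi.iterate_right n).eq, pow_iterate]

end FrobeniusOrbits

/-! ### Finitely generated fields -/

open IntermediateField in
theorem exists_transcendental_and_finite_adjoin_simple {k L : Type*} [Field k] [Field L]
    [Algebra k L] [Algebra.EssFiniteType k L] {x : L} (hx : Transcendental k x) :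
    ∃ E : IntermediateField k L, Transcendental E x ∧ Module.Finite E⟮x⟯ L := by
  have hindep : AlgebraicIndepOn k id ({x} : Set L) :=
    (algebraicIndependent_singleton_iff (⟨x, rfl⟩ : ({x} : Set L))).2 hx
  have : Algebra.IsAlgebraic (Algebra.adjoin k (Set.univ : Set L)) L := by
    rw [Algebra.adjoin_univ]
    exact ⟨fun y => isAlgebraic_algebraMap (⟨y, trivial⟩ : (⊤ : Subalgebra k L))⟩
  obtain ⟨B, hxB, -, hB⟩ := exists_isTranscendenceBasis_between {x} Set.univ
    (Set.subset_univ _) hindep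
  rw [Set.singleton_subset_iff] at hxB
  refine ⟨adjoin k (B \ {x}), ?_, ?_⟩
  · have himage : Subtype.val '' {b : B | (b : L) ≠ x} = B \ {x} := by
      ext y
      exact ⟨fun ⟨b, hb, hby⟩ => hby ▸ ⟨b.2, hb⟩, fun ⟨hy, hyx⟩ => ⟨⟨y, hy⟩, hyx, rfl⟩⟩
    rw [transcendental_adjoin_iff, ← himage]
    exact hB.1.transcendental_adjoin (i := ⟨x, hxB⟩) (by simp)
  · set E := adjoin k (B \ {x}) with hE
    have hadjoin : (E⟮x⟯).restrictScalars k = adjoin k (Set.range (Subtype.val : B → L)) := by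
      rw [hE, adjoin_adjoin_left, Set.sdiff_union_self,
        Set.union_eq_left.2 (Set.singleton_subset_iff.2 hxB), Subtype.range_coe]
    have : Algebra.IsAlgebraic E⟮x⟯ L := by
      have halg := hB.isAlgebraic_field
      rwa [← hadjoin] at halg
    have : Algebra.EssFiniteType E L := Algebra.EssFiniteType.of_comp k _ _
    have : Algebra.EssFiniteType E⟮x⟯ L := Algebra.EssFiniteType.of_comp E _ _
    exact Algebra.finite_of_essFiniteType_of_isAlgebraic

/-- The degree of a rational function in the transcendental `x`, composed with the norm. -/
theorem exists_hom_ne_one_of_transcendental_of_finite {E L : Type*} [Field E] [Field L]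
    [Algebra E L] {x : Lˣ} (hx : Transcendental E (x : L))
    [Module.Finite (IntermediateField.adjoin E {(x : L)}) L] :
    ∃ φ : Lˣ →* Multiplicative ℤ, φ x ≠ 1 := by
  set F := IntermediateField.adjoin E {(x : L)}
  let e := RatFunc.algEquivOfTranscendental (x : L) hx
  let normHom : L →* RatFunc E := (e.symm : F →* RatFunc E).comp (Algebra.norm F)
  let degHom : (RatFunc E)ˣ →* Multiplicative ℤ :=
    { toFun := fun u => Multiplicative.ofAdd (RatFunc.intDegree (u : RatFunc E))
      map_one' := by simp
      map_mul' := fun u v => by simp [RatFunc.intDegree_mul] }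
  have hnorm : Units.map normHom x = Units.mk0 _ RatFunc.X_ne_zero ^ Module.finrank F L := by
    have hgen : Algebra.norm F (x : L) =
        IntermediateField.AdjoinSimple.gen E (x : L) ^ Module.finrank F L :=
      Algebra.norm_algebraMap (S := L) (IntermediateField.AdjoinSimple.gen E (x : L))
    ext
    change e.symm (Algebra.norm F (x : L)) = _
    rw [hgen, map_pow, RatFunc.algEquivOfTranscendental_symm_gen, Units.val_pow_eq_pow_val,
      Units.val_mk0]
  refine ⟨degHom.comp (Units.map normHom), fun hone => ?_⟩
  rw [MonoidHom.comp_apply, hnorm, map_pow] at hone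
  have hdeg : degHom (Units.mk0 _ RatFunc.X_ne_zero) = Multiplicative.ofAdd 1 :=
    congrArg Multiplicative.ofAdd RatFunc.intDegree_X
  rw [hdeg, ← ofAdd_nsmul, ofAdd_eq_one, smul_eq_zero] at hone
  exact hone.elim Module.finrank_pos.ne' one_ne_zero

theorem isOfFinOrder_of_isAlgebraic_of_finite {k L : Type*} [Field k] [Finite k] [Field L]
    [Algebra k L] {x : Lˣ} (hx : IsAlgebraic k (x : L)) : IsOfFinOrder x := by
  have := IntermediateField.adjoin.finiteDimensional hx.isIntegral
  have := Module.finite_of_finite k (M := IntermediateField.adjoin k {(x : L)})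
  have hgen : IntermediateField.AdjoinSimple.gen k (x : L) ≠ 0 := fun h =>
    x.ne_zero (congrArg Subtype.val h)
  have hmap : Units.map ((IntermediateField.adjoin k {(x : L)}).val : _ →* L)
      (Units.mk0 _ hgen) = x := Units.ext rfl
  exact hmap ▸ MonoidHom.isOfFinOrder _ (isOfFinOrder_of_finite _)

theorem isOfFinOrder_of_forall_hom_eq_one (k : Type*) {L : Type*} [Field k] [Finite k] [Field L]
    [Algebra k L] [Algebra.EssFiniteType k L] (x : Lˣ)
    (hx : ∀ φ : Lˣ →* Multiplicative ℤ, φ x = 1) : IsOfFinOrder x := by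
  by_contra hfin
  obtain ⟨E, hE, _⟩ := exists_transcendental_and_finite_adjoin_simple (k := k) (x := (x : L))
    fun halg => hfin (isOfFinOrder_of_isAlgebraic_of_finite halg)
  obtain ⟨φ, hφ⟩ := exists_hom_ne_one_of_transcendental_of_finite hE
  exact hφ (hx φ)

theorem units_pow_char_injective (L : Type*) [Field L] (p : ℕ) [ExpChar L p] :
    Function.Injective fun x : Lˣ => x ^ p := fun x y hxy =>
  Units.ext (frobenius_inj L p (by simpa [frobenius_def] using congrArg Units.val hxy))

theorem exists_finite_closed_under_roots_of_essFiniteType {k K : Type*} [Field k] [Finite k]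
    [Field K] [Algebra k K] (L : IntermediateField k K) [Algebra.EssFiniteType k L] {p : ℕ}
    [Fact p.Prime] [CharP K p] {m : ℕ} (hm : m ≠ 0) {W : Set K} (hW : W.Finite)
    (hWL : W ⊆ L) {u : K} (hu : u ∈ L) (hu₀ : u ≠ 0) :
    ∃ E : Set K, E.Finite ∧ u ∈ E ∧
      ∀ e ∈ E, ∀ w ∈ W, ∀ v ∈ L, v ≠ 0 → v ^ p ^ m = e * w → v ∈ E := by
  have : CharP L p := (algebraMap L K).charP (algebraMap L K).injective p
  let incl : Lˣ → K := fun x => (x : L)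
  have hincl : Function.Injective incl := Subtype.val_injective.comp Units.val_injective
  have hlift : ∀ x ∈ L, x ≠ 0 → ∃ y, incl y = x := fun x hx hx₀ =>
    ⟨Units.mk0 ⟨x, hx⟩ fun h => hx₀ (congrArg Subtype.val h), rfl⟩
  obtain ⟨u, rfl⟩ := hlift u hu hu₀
  obtain ⟨E, hE, huE, hclosed⟩ := exists_finite_closed_under_roots
    (isOfFinOrder_of_forall_hom_eq_one k)
    (Nat.one_lt_pow hm (Fact.out : p.Prime).one_lt)
    (pow_pow_injective (units_pow_char_injective L p) m) (hW.preimage hincl.injOn) u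
  refine ⟨incl '' E, hE.image incl, ⟨u, huE, rfl⟩, ?_⟩
  rintro _ ⟨e, he, rfl⟩ w hw v hv hv₀ hve
  have hw₀ : w ≠ 0 := fun h => pow_ne_zero _ hv₀ (by rw [hve, h, mul_zero])
  obtain ⟨w, rfl⟩ := hlift w (hWL hw) hw₀
  obtain ⟨v, rfl⟩ := hlift v hv hv₀
  exact ⟨v, hclosed e he w hw v (hincl hve), rfl⟩

theorem exists_essFiniteType_forall_apply_mem {F K G ι : Type*} [Field F] [Field K] [Algebra F K]
    [CommGroup G] [Finite ι] (χ : ι → G →* Kˣ) {Γ : Subgroup G} (hΓ : Γ.FG) :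
    ∃ L : IntermediateField F K, Algebra.EssFiniteType F L ∧
      ∀ i, ∀ g ∈ Γ, (χ i g : K) ∈ L := by
  obtain ⟨s, rfl⟩ := hΓ
  let S : Set K := Set.image2 (fun i g => (χ i g : K)) Set.univ s
  have hS : S.Finite := Set.Finite.image2 _ Set.finite_univ s.finite_toSet
  refine ⟨IntermediateField.adjoin F S, ?_, fun i g hg => ?_⟩
  · exact IntermediateField.essFiniteType_iff.2 ⟨hS.toFinset, by rw [hS.coe_toFinset]⟩
  · induction hg using Subgroup.closure_induction with
    | mem g hg => exact IntermediateField.subset_adjoin _ _ ⟨i, trivial, g, hg, rfl⟩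
    | one => simp only [map_one, Units.val_one, one_mem]
    | mul a b _ _ ha hb => exact map_mul (χ i) a b ▸ mul_mem ha hb
    | inv a _ ha => simpa only [map_inv, Units.val_inv_eq_inv_val] using inv_mem ha

/-! ### Rigid exponential sums -/

section ExponentialSums

variable {G K ι : Type*} [CommGroup G] [Field K]

/-- The coefficients `c'` are `Q`-th roots of the coefficients of the exponential sum
`∑ i, c i * χ i` on `G` translated by `g`. For `Q` a power of the characteristic, the zero set of
`c'` is the preimage of the zero set of `c` under `y ↦ g * y ^ Q`. -/
def IsFrobeniusRoot (χ : ι → G →* Kˣ) (Q : ℕ) (g : G) (c c' : ι → K) : Prop :=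
  ∀ i, c' i ^ Q = c i * χ i g

variable {χ : ι → G →* Kˣ} {j : ι} {c c' c'' : ι → K} {Γ : Subgroup G} {p : ℕ}

namespace IsFrobeniusRoot

variable {Q Q' : ℕ} {g g' : G}

theorem trans (h : IsFrobeniusRoot χ Q g c c') (h' : IsFrobeniusRoot χ Q' g' c' c'') :
    IsFrobeniusRoot χ (Q * Q') (g * g' ^ Q) c c'' := fun i => by
  rw [mul_comm Q, pow_mul, h' i, mul_pow, h i, map_mul, map_pow, Units.val_mul,
    Units.val_pow_eq_pow_val, mul_assoc]

theorem apply_eq_apply (hc : ∀ i, c i ≠ 0) (h : IsFrobeniusRoot χ Q g c c')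
    (h' : IsFrobeniusRoot χ Q g' c c') (i : ι) : χ i g = χ i g' :=
  Units.ext (mul_left_cancel₀ (hc i) ((h i).symm.trans (h' i)))

theorem exists_pow_succ (hg : g ∈ Γ) (h : IsFrobeniusRoot χ Q g c c) (n : ℕ) :
    ∃ b ∈ Γ, IsFrobeniusRoot χ (Q ^ (n + 1)) (g * b ^ Q) c c := by
  induction n with
  | zero => exact ⟨1, Γ.one_mem, by simpa using h⟩
  | succ n ih =>
    obtain ⟨b, hb, hroot⟩ := ih
    exact ⟨g * b ^ Q, Γ.mul_mem hg (Γ.pow_mem hb Q), pow_succ' Q (n + 1) ▸ h.trans hroot⟩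

end IsFrobeniusRoot

theorem exists_isFrobeniusRoot [ExpChar K p] [PerfectRing K p] (χ : ι → G →* Kˣ) (n : ℕ) (g : G)
    (c : ι → K) : ∃ c', IsFrobeniusRoot χ (p ^ n) g c c' :=
  ⟨fun i => (iterateFrobeniusEquiv K p n).symm (c i * χ i g), fun _ =>
    (iterateFrobeniusEquiv K p n).apply_symm_apply _⟩

/-- Going once around the loop at `c` and then to `c''` differs from going to `c''` and then around
the loop there only by a torsion element, and torsion elements are `Q`-th powers. -/
theorem IsFrobeniusRoot.exists_eq_mul_pow {Q : ℕ} (hQ : Function.Injective fun x : G => x ^ Q)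
    (htors : ∀ g : G, (∀ i, χ i g = 1) → IsOfFinOrder g) (hc : ∀ i, c i ≠ 0)
    {g : G} (hg : g ∈ Γ) (hloop : IsFrobeniusRoot χ Q g c c)
    {γ : G} (hγ : γ ∈ Γ) (hstep : IsFrobeniusRoot χ Q γ c c')
    {l : ℕ} {b : G} (hb : b ∈ Γ) (hpath : IsFrobeniusRoot χ (Q ^ l) b c' c'')
    {n : ℕ} {g' : G} (hg' : g' ∈ Γ) (hloop' : IsFrobeniusRoot χ (Q ^ (n + 1)) g' c'' c'') :
    ∃ z ∈ Γ, γ = g * z ^ Q := by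
  obtain ⟨b', hb', hloopn⟩ := hloop.exists_pow_succ hg n
  have hleft := hloopn.trans (hstep.trans hpath)
  have hright := (hstep.trans hpath).trans hloop'
  rw [mul_comm] at hright
  have happly := hright.apply_eq_apply hc hleft
  obtain ⟨t, ht, htorsion⟩ := exists_mem_zpowers_pow_eq_of_isOfFinOrder hQ <|
    htors _ fun i => (map_div (χ i) _ _).trans (div_eq_one.2 (happly i))
  refine ⟨t * b' * (γ * b ^ Q) ^ Q ^ n / (b * g' ^ Q ^ l), ?_, ?_⟩
  · have hbranch := Γ.mul_mem hγ (Γ.pow_mem hb Q)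
    refine Γ.div_mem (Γ.mul_mem (Γ.mul_mem (Subgroup.zpowers_le.2 ?_ ht) hb')
      (Γ.pow_mem hbranch _)) (Γ.mul_mem hb (Γ.pow_mem hg' _))
    exact Γ.div_mem (Γ.mul_mem hbranch (Γ.pow_mem hg' _))
      (Γ.mul_mem (Γ.mul_mem hg (Γ.pow_mem hb' Q)) (Γ.pow_mem hbranch _))
  · rw [eq_div_iff_mul_eq'] at htorsion
    rw [div_pow, mul_div_assoc', eq_div_iff_mul_eq']
    calc γ * (b * g' ^ Q ^ l) ^ Q = γ * b ^ Q * g' ^ (Q * Q ^ l) := by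
          rw [mul_pow, ← pow_mul, mul_comm Q, mul_assoc]
      _ = t ^ Q * (g * b' ^ Q * (γ * b ^ Q) ^ Q ^ (n + 1)) := htorsion.symm
      _ = g * (t * b' * (γ * b ^ Q) ^ Q ^ n) ^ Q := by
          simp only [mul_pow _ _ Q, ← pow_mul, pow_succ, mul_assoc, mul_left_comm]

/-- The zero set of the exponential sum `∑ i, c i * χ i` on the group `G`. -/
def zeroSet [Fintype ι] (χ : ι → G →* Kˣ) (c : ι → K) : Set G :=
  {g | ∑ i, c i * (χ i g : K) = 0}

variable [Fintype ι]

theorem IsFrobeniusRoot.mem_zeroSet_iff [ExpChar K p] {n : ℕ} {g : G}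
    (h : IsFrobeniusRoot χ (p ^ n) g c c') {y : G} :
    y ∈ zeroSet χ c' ↔ g * y ^ p ^ n ∈ zeroSet χ c := by
  have hsum : (∑ i, c' i * (χ i y : K)) ^ p ^ n = ∑ i, c i * (χ i (g * y ^ p ^ n) : K) := by
    rw [sum_pow_char_pow]
    refine Finset.sum_congr rfl fun i _ => ?_
    rw [mul_pow, h i, map_mul, map_pow, Units.val_mul, Units.val_pow_eq_pow_val, mul_assoc]
  rw [zeroSet, zeroSet, Set.mem_ofPred_eq, Set.mem_ofPred_eq, ← hsum,
    pow_eq_zero_iff (pow_ne_zero n (expChar_pos K p).ne')]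

theorem zeroSet_inter_eq_biUnion_image [ExpChar K p] {m : ℕ} {R : Set G} (hRΓ : R ⊆ Γ)
    (hR : ∀ x ∈ Γ, ∃ γ ∈ R, ∃ y ∈ Γ, x = γ * y ^ p ^ m) {r : G → ι → K}
    (hr : ∀ γ, IsFrobeniusRoot χ (p ^ m) γ c (r γ)) :
    zeroSet χ c ∩ Γ = ⋃ γ ∈ R, (fun y => γ * y ^ p ^ m) '' (zeroSet χ (r γ) ∩ Γ) := by
  refine Set.Subset.antisymm ?_ (Set.iUnion₂_subset ?_)
  · rintro x ⟨hx, hxΓ⟩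
    obtain ⟨γ, hγ, y, hy, rfl⟩ := hR x hxΓ
    exact Set.mem_iUnion₂.2 ⟨γ, hγ, y, ⟨(hr γ).mem_zeroSet_iff.2 hx, hy⟩, rfl⟩
  · rintro γ hγ _ ⟨y, ⟨hy, hyΓ⟩, rfl⟩
    exact ⟨(hr γ).mem_zeroSet_iff.1 hy, Γ.mul_mem (hRΓ hγ) (Γ.pow_mem hyΓ _)⟩

theorem zeroSet_smul (χ : ι → G →* Kˣ) {a : K} (ha : a ≠ 0) (c : ι → K) :
    zeroSet χ (a • c) = zeroSet χ c := by
  ext g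
  simp only [zeroSet, Set.mem_ofPred_eq, Pi.smul_apply, smul_eq_mul, mul_assoc, ← Finset.mul_sum,
    mul_eq_zero, ha, false_or]

/-- An exponential sum `∑ i, c i * χ i`, normalised at the index `j`, is rigid if all its
coefficients are nonzero and it has only finitely many common zeros with any exponential sum in the
same characters that is not a multiple of it. Subtracting a multiple, it is enough to ask this of
the nonzero sums without a term at `j`. -/
structure IsRigid (χ : ι → G →* Kˣ) (j : ι) (c : ι → K) : Prop where
  apply_eq_one : c j = 1
  apply_ne_zero (i : ι) : c i ≠ 0
  finite_inter (d : ι → K) : d ≠ 0 → d j = 0 → (zeroSet χ c ∩ zeroSet χ d).Finite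

namespace IsRigid

theorem of_isFrobeniusRoot [ExpChar K p] (hp : Function.Injective fun x : G => x ^ p)
    (hχj : χ j = 1) {n : ℕ} {g : G} (hc : IsRigid χ j c) (h : IsFrobeniusRoot χ (p ^ n) g c c') :
    IsRigid χ j c' := by
  have hpn : p ^ n ≠ 0 := pow_ne_zero n (expChar_pos K p).ne'
  refine ⟨?_, fun i hi => ?_, fun d' hd' hd'j => ?_⟩
  · refine iterateFrobenius_inj K p n ?_
    rw [iterateFrobenius_def, map_one, h j, hc.apply_eq_one, hχj, MonoidHom.one_apply,
      Units.val_one, mul_one]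
  · have := h i
    rw [hi, zero_pow hpn] at this
    exact mul_ne_zero (hc.apply_ne_zero i) (χ i g).ne_zero this.symm
  · let d : ι → K := fun i => d' i ^ p ^ n * ((χ i g)⁻¹ : Kˣ)
    have hd : IsFrobeniusRoot χ (p ^ n) g d d' := fun i => (Units.inv_mul_cancel_right _ _).symm
    have hd₀ : d ≠ 0 := by
      obtain ⟨i, hi⟩ := Function.ne_iff.1 hd'
      exact Function.ne_iff.2 ⟨i, mul_ne_zero (pow_ne_zero _ hi) (Units.ne_zero _)⟩
    have hdj : d j = 0 := by simp only [d, hd'j, zero_pow hpn, zero_mul]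
    refine ((hc.finite_inter d hd₀ hdj).preimage (f := fun y => g * y ^ p ^ n)
      ((mul_right_injective g).comp (pow_pow_injective hp n)).injOn).subset ?_
    exact fun y hy => ⟨h.mem_zeroSet_iff.1 hy.1, hd.mem_zeroSet_iff.1 hy.2⟩

/-- Applying a linear form that kills `1` but not `c i` to the coefficients yields a second
exponential sum vanishing on `zeroSet χ c ∩ Γ`. -/
theorem apply_mem_of_infinite (hc : IsRigid χ j c) {F : Subfield K}
    (hF : ∀ i, ∀ g ∈ Γ, (χ i g : K) ∈ F) (hinf : (zeroSet χ c ∩ Γ).Infinite) (i : ι) :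
    c i ∈ F := by
  by_contra hi
  have hspan : c i ∉ Submodule.span F {(1 : K)} := fun h => by
    obtain ⟨a, ha⟩ := Submodule.mem_span_singleton.1 h
    exact hi (by simp [← ha, Subfield.smul_def])
  obtain ⟨f, hfi, hker⟩ := Submodule.exists_le_ker_of_notMem hspan
  have hf1 : f 1 = 0 := hker (Submodule.mem_span_singleton_self 1)
  refine hinf ((hc.finite_inter (fun i => (f (c i) : K)) ?_ ?_).subset ?_)
  · exact Function.ne_iff.2 ⟨i, fun h => hfi (Subtype.ext h)⟩
  · simp only [hc.apply_eq_one, hf1, ZeroMemClass.coe_zero]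
  rintro g ⟨hg, hgΓ⟩
  refine ⟨hg, ?_⟩
  have happly : ∀ i, f (c i * χ i g) = ⟨χ i g, hF i g hgΓ⟩ * f (c i) := fun i => by
    rw [mul_comm, ← smul_eq_mul (⟨χ i g, hF i g hgΓ⟩ : F), ← map_smul]
    rfl
  calc ∑ i, (f (c i) : K) * χ i g = (f (∑ i, c i * χ i g) : K) := by
        simp only [map_sum, happly, AddSubmonoidClass.coe_finsetSum, MulMemClass.coe_mul, mul_comm]
    _ = 0 := by rw [show ∑ i, c i * (χ i g : K) = 0 from hg, map_zero, ZeroMemClass.coe_zero]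

variable [Fact p.Prime] [CharP K p]

theorem exists_finite_closed_under_roots (hΓ : Γ.FG) {m : ℕ} (hm : m ≠ 0) {R : Set G}
    (hR : R.Finite) (hRΓ : R ⊆ Γ) (hc : IsRigid χ j c) (hinf : (zeroSet χ c ∩ Γ).Infinite) :
    ∃ D : Set (ι → K), D.Finite ∧ c ∈ D ∧
      ∀ e ∈ D, ∀ γ ∈ R, ∀ e', IsFrobeniusRoot χ (p ^ m) γ e e' → IsRigid χ j e' →
        (zeroSet χ e' ∩ Γ).Infinite → e' ∈ D := by
  let := ZMod.algebra K p
  obtain ⟨L, _, hL⟩ := exists_essFiniteType_forall_apply_mem (F := ZMod p) χ hΓ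
  have hE : ∀ i, ∃ E : Set K, E.Finite ∧ c i ∈ E ∧
      ∀ e ∈ E, ∀ w ∈ (fun γ => (χ i γ : K)) '' R, ∀ v ∈ L, v ≠ 0 → v ^ p ^ m = e * w → v ∈ E := by
    refine fun i => exists_finite_closed_under_roots_of_essFiniteType L hm (hR.image _) ?_
      (hc.apply_mem_of_infinite (F := L.toSubfield) hL hinf i) (hc.apply_ne_zero i)
    rintro _ ⟨γ, hγ, rfl⟩
    exact hL i γ (hRΓ hγ)
  choose E hfin hmem hclosed using hE
  refine ⟨{e | ∀ i, e i ∈ E i}, Set.Finite.pi' hfin, hmem, ?_⟩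
  exact fun e he γ hγ e' hroot he' hinf' i => hclosed i _ (he i) _ ⟨γ, hγ, rfl⟩ _
    (he'.apply_mem_of_infinite (F := L.toSubfield) hL hinf' i) (he'.apply_ne_zero i) (hroot i)

theorem descent_induction (hp : Function.Injective fun x : G => x ^ p) (hχj : χ j = 1)
    (hΓ : Γ.FG) {m : ℕ} (hm : m ≠ 0) {R : Set G} (hR : R.Finite) (hRΓ : R ⊆ Γ)
    {P : (ι → K) → Prop} (hfin : ∀ c, (zeroSet χ c ∩ Γ).Finite → P c)
    (hcycle : ∀ c, IsRigid χ j c → ∀ n, ∀ g ∈ Γ,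
      IsFrobeniusRoot χ ((p ^ m) ^ (n + 1)) g c c → P c)
    (hstep : ∀ c, (∀ γ ∈ R, ∀ c', IsFrobeniusRoot χ (p ^ m) γ c c' → P c') → P c)
    (hc : IsRigid χ j c) : P c := by
  by_cases hinf : (zeroSet χ c ∩ Γ).Finite
  · exact hfin c hinf
  obtain ⟨D, hD, hcD, hclosed⟩ := hc.exists_finite_closed_under_roots hΓ hm hR hRΓ hinf
  let r : (ι → K) → (ι → K) → Prop := fun c c' => ∃ γ ∈ R, IsFrobeniusRoot χ (p ^ m) γ c c'
  have hpath : ∀ {c c'}, Relation.TransGen r c c' →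
      ∃ n, ∃ g ∈ Γ, IsFrobeniusRoot χ ((p ^ m) ^ (n + 1)) g c c' := fun h => by
    induction h with
    | single h =>
      obtain ⟨γ, hγ, h⟩ := h
      exact ⟨0, γ, hRΓ hγ, by rwa [zero_add, pow_one]⟩
    | tail _ h ih =>
      obtain ⟨n, g, hg, hroot⟩ := ih
      obtain ⟨γ, hγ, h⟩ := h
      exact ⟨n + 1, _, Γ.mul_mem hg (Γ.pow_mem (hRΓ hγ) _),
        pow_succ (p ^ m) (n + 1) ▸ hroot.trans h⟩
  refine induction_on_finite_graph (r := r) (D := D ∩ {c | IsRigid χ j c}) (hD.inter_of_left _)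
    ?_ ?_ (fun c _ h => hstep c fun γ hγ c' hroot => h c' ⟨γ, hγ, hroot⟩) c ⟨hcD, hc⟩
  · rintro c ⟨hcD, hc⟩ c' ⟨γ, hγ, hroot⟩
    have hc' := hc.of_isFrobeniusRoot hp hχj hroot
    refine or_iff_not_imp_right.2 fun hP => ⟨?_, hc'⟩
    exact hclosed c hcD γ hγ c' hroot hc' fun h => hP (hfin c' h)
  · rintro c ⟨-, hc⟩ hcc
    obtain ⟨n, g, hg, hroot⟩ := hpath hcc
    exact hcycle c hc n g hg hroot

variable [PerfectRing K p]

theorem finite_or_exists_isFrobeniusRoot_loop (hp : Function.Injective fun x : G => x ^ p)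
    (hχj : χ j = 1) (hΓ : Γ.FG) {m : ℕ} (hm : m ≠ 0) (hc : IsRigid χ j c) :
    (zeroSet χ c ∩ Γ).Finite ∨ ∃ c' l n, ∃ b ∈ Γ, ∃ g ∈ Γ,
      IsFrobeniusRoot χ ((p ^ m) ^ l) b c c' ∧ IsFrobeniusRoot χ ((p ^ m) ^ (n + 1)) g c' c' := by
  obtain ⟨R, hRfin, hRΓ, hR⟩ :=
    exists_finite_subset_forall_eq_mul_pow hΓ (pow_ne_zero m (Fact.out : p.Prime).ne_zero)
  refine hc.descent_induction (P := fun c => (zeroSet χ c ∩ Γ).Finite ∨ ∃ c' l n, ∃ b ∈ Γ, ∃ g ∈ Γ,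
    IsFrobeniusRoot χ ((p ^ m) ^ l) b c c' ∧ IsFrobeniusRoot χ ((p ^ m) ^ (n + 1)) g c' c')
    hp hχj hΓ hm hRfin hRΓ (fun c => Or.inl)
    (fun c _ n g hg hloop => Or.inr ⟨c, 0, n, 1, Γ.one_mem, g, hg, fun i => ?_, hloop⟩)
    (fun c hstep => ?_)
  · simp only [pow_zero, pow_one, map_one, Units.val_one, mul_one]
  choose r hr using fun γ => exists_isFrobeniusRoot (p := p) χ m γ c
  by_cases hfin : ∀ γ ∈ R, (zeroSet χ (r γ) ∩ Γ).Finite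
  · rw [zeroSet_inter_eq_biUnion_image hRΓ hR hr]
    exact Or.inl (hRfin.biUnion fun γ hγ => (hfin γ hγ).image _)
  push Not at hfin
  obtain ⟨γ, hγ, hinf⟩ := hfin
  obtain ⟨c', l, n, b, hb, g, hg, hpath, hloop⟩ := (hstep γ hγ _ (hr γ)).resolve_left hinf
  exact Or.inr ⟨c', l + 1, n, _, Γ.mul_mem (hRΓ hγ) (Γ.pow_mem hb _), g, hg,
    pow_succ' (p ^ m) l ▸ (hr γ).trans hpath, hloop⟩

theorem finite_zeroSet_inter_diff_image (hp : Function.Injective fun x : G => x ^ p)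
    (hχj : χ j = 1) (htors : ∀ g : G, (∀ i, χ i g = 1) → IsOfFinOrder g) (hΓ : Γ.FG) {m : ℕ}
    (hm : m ≠ 0) (hc : IsRigid χ j c) {g : G} (hg : g ∈ Γ)
    (hloop : IsFrobeniusRoot χ (p ^ m) g c c) :
    ((zeroSet χ c ∩ Γ) \ (fun y => g * y ^ p ^ m) '' (zeroSet χ c ∩ Γ)).Finite := by
  obtain ⟨R, hRfin, hRΓ, hR⟩ :=
    exists_finite_subset_forall_eq_mul_pow hΓ (pow_ne_zero m (Fact.out : p.Prime).ne_zero)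
  choose r hr using fun γ => exists_isFrobeniusRoot (p := p) χ m γ c
  refine ((hRfin.inter_of_left {γ | (zeroSet χ (r γ) ∩ Γ).Finite}).biUnion
    (t := fun γ => (fun y => γ * y ^ p ^ m) '' (zeroSet χ (r γ) ∩ Γ))
    fun γ hγ => hγ.2.image _).subset ?_
  rintro x ⟨⟨hx, hxΓ⟩, hnot⟩
  obtain ⟨γ, hγ, y, hy, rfl⟩ := hR x hxΓ
  refine Set.mem_iUnion₂.2 ⟨γ, ⟨hγ, ?_⟩, y, ⟨(hr γ).mem_zeroSet_iff.2 hx, hy⟩, rfl⟩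
  refine ((hc.of_isFrobeniusRoot hp hχj (hr γ)).finite_or_exists_isFrobeniusRoot_loop
    hp hχj hΓ hm).resolve_right ?_
  rintro ⟨c', l, n, b, hb, g', hg', hpath, hloop'⟩
  obtain ⟨z, hz, rfl⟩ := hloop.exists_eq_mul_pow (pow_pow_injective hp m) htors hc.apply_ne_zero hg
    (hRΓ hγ) (hr γ) hb hpath hg' hloop'
  rw [mul_assoc, ← mul_pow] at hx hnot
  exact hnot ⟨z * y, ⟨hloop.mem_zeroSet_iff.2 hx, Γ.mul_mem hz hy⟩, rfl⟩

theorem isFiniteUnionOf_isFrobeniusOrbit_of_loop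
    (hdiv : ∀ n ≠ 0, Function.Surjective fun x : G => x ^ n)
    (hp : Function.Injective fun x : G => x ^ p) (hχj : χ j = 1)
    (htors : ∀ g : G, (∀ i, χ i g = 1) → IsOfFinOrder g) (hΓ : Γ.FG) {m : ℕ} (hm : m ≠ 0)
    (hc : IsRigid χ j c) {g : G} (hg : g ∈ Γ) (hloop : IsFrobeniusRoot χ (p ^ m) g c c) :
    IsFiniteUnionOf (IsFrobeniusOrbit p Γ) (zeroSet χ c ∩ Γ) := by
  have hmaps : Set.MapsTo (fun y => g * y ^ p ^ m) (zeroSet χ c ∩ Γ) (zeroSet χ c ∩ Γ) :=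
    fun y hy => ⟨hloop.mem_zeroSet_iff.1 hy.1, Γ.mul_mem hg (Γ.pow_mem hy.2 _)⟩
  have hone : 1 < p := (Fact.out : p.Prime).one_lt
  have hinter := finite_iInter_image_iterate_mul_pow hΓ hg (Nat.one_lt_pow hm hone)
    (Set.inter_subset_right (s := zeroSet χ c))
  rw [eq_iInter_image_iterate_union_biUnion_range_iterate hmaps]
  refine .union (.of_finite hinter fun x hx => ?_)
    (.biUnion (hc.finite_zeroSet_inter_diff_image hp hχj htors hΓ hm hg hloop) fun x hx =>
      .single (isFrobeniusOrbit_range_iterate_mul_pow hdiv hone hm hg hx.1.2))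
  obtain ⟨y, hy, rfl⟩ := Set.mem_iInter.1 hx 0
  exact isFrobeniusOrbit_singleton hy.2

theorem isFiniteUnionOf_isFrobeniusOrbit
    (hdiv : ∀ n ≠ 0, Function.Surjective fun x : G => x ^ n)
    (hp : Function.Injective fun x : G => x ^ p) (hχj : χ j = 1)
    (htors : ∀ g : G, (∀ i, χ i g = 1) → IsOfFinOrder g) (hΓ : Γ.FG) (hc : IsRigid χ j c) :
    IsFiniteUnionOf (IsFrobeniusOrbit p Γ) (zeroSet χ c ∩ Γ) := by
  obtain ⟨R, hRfin, hRΓ, hR⟩ := exists_finite_subset_forall_eq_mul_pow (q := p ^ 1) hΓ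
    (pow_ne_zero 1 (Fact.out : p.Prime).ne_zero)
  refine hc.descent_induction
    (P := fun c => IsFiniteUnionOf (IsFrobeniusOrbit p Γ) (zeroSet χ c ∩ Γ))
    hp hχj hΓ one_ne_zero hRfin hRΓ
    (fun c hfin => .of_finite hfin fun x hx => isFrobeniusOrbit_singleton hx.2)
    (fun c hc n g hg hloop => ?_) (fun c hstep => ?_)
  · rw [pow_one] at hloop
    exact hc.isFiniteUnionOf_isFrobeniusOrbit_of_loop hdiv hp hχj htors hΓ n.succ_ne_zero hg hloop
  · choose r hr using fun γ => exists_isFrobeniusRoot (p := p) χ 1 γ c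
    rw [zeroSet_inter_eq_biUnion_image hRΓ hR hr]
    exact .biUnion hRfin fun γ hγ => (hstep γ hγ _ (hr γ)).image fun S hS => hS.image (hRΓ hγ) _

end IsRigid

end ExponentialSums

/-! ### Curves in the torus -/

theorem mem_minimalPrimes_span_pair_of_prime_of_not_dvd {R : Type*} [CommRing R] [IsDomain R]
    (hR : ringKrullDim R ≤ 2) {f g : R} (hf : Prime f) (hfg : ¬f ∣ g) {M : Ideal R} [M.IsPrime]
    (hfM : f ∈ M) (hgM : g ∈ M) : M ∈ (Ideal.span {f, g}).minimalPrimes := by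
  obtain ⟨P, hP, hPM⟩ := Ideal.exists_minimalPrimes_le (I := Ideal.span {f, g}) (J := M) <|
    Ideal.span_le.2 (Set.pair_subset hfM hgM)
  obtain rfl | hlt := hPM.eq_or_lt
  · exact hP
  exfalso
  have : P.IsPrime := hP.1.1
  have : (Ideal.span {f}).IsPrime := (Ideal.span_singleton_prime hf.ne_zero).2 hf
  have hbot : (⊥ : Ideal R) < Ideal.span {f} :=
    bot_lt_iff_ne_bot.2 (mt Ideal.span_singleton_eq_bot.1 hf.ne_zero)
  have hfP : Ideal.span {f} < P := by
    refine lt_of_le_of_ne ?_ fun h => hfg (Ideal.mem_span_singleton.1 ?_)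
    · exact (Ideal.span_mono (Set.singleton_subset_iff.2 (Set.mem_insert f {g}))).trans hP.1.2
    · exact h ▸ hP.1.2 (Ideal.subset_span (Set.mem_insert_of_mem f rfl))
  have hheight : M.height ≤ 2 :=
    WithBot.coe_le_coe.1 ((Ideal.height_le_ringKrullDim_of_isPrime (I := M)).trans hR)
  have hthree : (0 : ℕ∞) + 1 + 1 + 1 ≤ M.height := by
    refine le_trans ?_ (Ideal.height_add_one_le_of_lt_of_isPrime hlt)
    gcongr
    refine le_trans ?_ (Ideal.height_add_one_le_of_lt_of_isPrime hfP)
    gcongr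
    refine le_trans ?_ (Ideal.height_add_one_le_of_lt_of_isPrime hbot)
    gcongr
    exact zero_le
  exact absurd (hthree.trans hheight) (by decide)

theorem exists_forall_exists_eq_zsmul_of_det_eq_zero {s : Set (ℤ × ℤ)}
    (hs : ∀ v ∈ s, ∀ w ∈ s, v.1 * w.2 - v.2 * w.1 = 0) : ∃ w, ∀ v ∈ s, ∃ n : ℤ, v = n • w := by
  by_cases hzero : ∀ v ∈ s, v = 0
  · exact ⟨0, fun v hv => ⟨0, by rw [hzero v hv, zero_smul]⟩⟩
  push Not at hzero
  obtain ⟨⟨a, b⟩, hv₀, hne⟩ := hzero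
  have hgcd : 0 < Int.gcd a b := Nat.pos_of_ne_zero fun h => hne <| by
    obtain ⟨rfl, rfl⟩ := Int.gcd_eq_zero_iff.1 h
    rfl
  obtain ⟨d, a', b', hd, hcoprime, rfl, rfl⟩ := Int.exists_gcd_one' hgcd
  obtain ⟨u, v, huv⟩ := Int.isCoprime_iff_gcd_eq_one.2 hcoprime
  refine ⟨(a', b'), fun ⟨x, y⟩ hxy => ⟨u * x + v * y, ?_⟩⟩
  have hdet : a' * y - b' * x = 0 := by
    have hd' : (d : ℤ) ≠ 0 := mod_cast hd.ne'
    refine mul_left_cancel₀ hd' ?_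
    linear_combination hs _ hv₀ _ hxy
  refine Prod.ext ?_ ?_
  · change x = (u * x + v * y) * a'
    linear_combination (-x) * huv - v * hdet
  · change y = (u * x + v * y) * b'
    linear_combination (-y) * huv + u * hdet

section TorusCharacters

variable {A : Type*} [CommGroup A]

/-- The character `(x, y) ↦ x ^ v.1 * y ^ v.2` of the torus. -/
def torusChar (v : ℤ × ℤ) : A × A →* A :=
  (zpowGroupHom v.1).comp (MonoidHom.fst A A) * (zpowGroupHom v.2).comp (MonoidHom.snd A A)

theorem torusChar_apply (v : ℤ × ℤ) (g : A × A) : torusChar v g = g.1 ^ v.1 * g.2 ^ v.2 :=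
  rfl

theorem torusChar_zero : (torusChar 0 : A × A →* A) = 1 :=
  MonoidHom.ext fun g => by
    simp only [torusChar_apply, Prod.fst_zero, Prod.snd_zero, zpow_zero, mul_one,
      MonoidHom.one_apply]

theorem torusChar_add (v w : ℤ × ℤ) (g : A × A) :
    torusChar (v + w) g = torusChar v g * torusChar w g := by
  simp only [torusChar_apply, Prod.fst_add, Prod.snd_add, zpow_add, mul_mul_mul_comm]

theorem torusChar_zsmul (n : ℤ) (v : ℤ × ℤ) (g : A × A) :
    torusChar (n • v) g = torusChar v g ^ n := by
  simp only [torusChar_apply, Prod.smul_fst, Prod.smul_snd, smul_eq_mul, mul_comm n, zpow_mul,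
    mul_zpow]

theorem isOfFinOrder_of_torusChar_eq_one {v w : ℤ × ℤ} (hdet : v.1 * w.2 - v.2 * w.1 ≠ 0)
    {g : A × A} (hv : torusChar v g = 1) (hw : torusChar w g = 1) : IsOfFinOrder g := by
  refine isOfFinOrder_iff_zpow_eq_one.2 ⟨_, hdet, Prod.ext ?_ ?_⟩
  · have hfst : torusChar (w.2 • v + (-v.2) • w) g = g.1 ^ (v.1 * w.2 - v.2 * w.1) := by
      rw [torusChar_apply, Prod.fst_add, Prod.snd_add]
      simp only [Prod.smul_fst, Prod.smul_snd, smul_eq_mul]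
      ring_nf
      rw [zpow_zero, mul_one]
    rw [Prod.pow_fst, ← hfst, torusChar_add, torusChar_zsmul, torusChar_zsmul, hv, hw, one_zpow,
      one_zpow, mul_one, Prod.fst_one]
  · have hsnd : torusChar ((-w.1) • v + v.1 • w) g = g.2 ^ (v.1 * w.2 - v.2 * w.1) := by
      rw [torusChar_apply, Prod.fst_add, Prod.snd_add]
      simp only [Prod.smul_fst, Prod.smul_snd, smul_eq_mul]
      ring_nf
      rw [zpow_zero, one_mul]
    rw [Prod.pow_snd, ← hsnd, torusChar_add, torusChar_zsmul, torusChar_zsmul, hv, hw, one_zpow,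
      one_zpow, mul_one, Prod.snd_one]

end TorusCharacters

section PlaneCurves

open MvPolynomial

variable {K : Type*} [Field K]

theorem ker_eval_injective {σ : Type*} :
    Function.Injective fun z : σ → K => RingHom.ker (eval z) := fun z w h => by
  have h' : RingHom.ker (eval z) = RingHom.ker (eval w) := h
  funext i
  have hi : X i - C (z i) ∈ RingHom.ker (eval z) := by
    rw [RingHom.mem_ker, map_sub, eval_X, eval_C, sub_self]
  have hi' : X i - C (z i) ∈ RingHom.ker (eval w) := h' ▸ hi
  rw [RingHom.mem_ker, map_sub, eval_X, eval_C, sub_eq_zero] at hi'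
  exact hi'.symm

theorem finite_setOf_eval_eq_zero_of_irreducible_of_not_dvd {f g : MvPolynomial (Fin 2) K}
    (hf : Irreducible f) (hfg : ¬f ∣ g) : {z | eval z f = 0 ∧ eval z g = 0}.Finite := by
  have hdim : ringKrullDim (MvPolynomial (Fin 2) K) ≤ 2 := by
    rw [MvPolynomial.ringKrullDim_of_isNoetherianRing, ringKrullDim_eq_zero_of_field, zero_add,
      Nat.card_fin, Nat.cast_ofNat]
  refine .of_finite_image ((Ideal.finite_minimalPrimes_of_isNoetherianRing _
    (Ideal.span {f, g})).subset ?_) ker_eval_injective.injOn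
  rintro _ ⟨z, ⟨hzf, hzg⟩, rfl⟩
  have : (RingHom.ker (eval z)).IsPrime := RingHom.ker_isPrime _
  exact mem_minimalPrimes_span_pair_of_prime_of_not_dvd hdim hf.prime hfg hzf hzg

theorem exists_eq_C_mul_of_dvd_of_totalDegree_le {σ : Type*} {f g : MvPolynomial σ K}
    (hfg : f ∣ g) (hdeg : g.totalDegree ≤ f.totalDegree) : ∃ a, g = C a * f := by
  obtain ⟨h, rfl⟩ := hfg
  obtain rfl | hf := eq_or_ne f 0
  · exact ⟨0, by rw [zero_mul, mul_zero]⟩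
  obtain rfl | hh := eq_or_ne h 0
  · exact ⟨0, by rw [mul_zero, C_0, zero_mul]⟩
  rw [totalDegree_mul_of_isDomain hf hh] at hdeg
  exact ⟨_, by rw [mul_comm, ← totalDegree_eq_zero_iff_eq_C.1 (by omega : h.totalDegree = 0)]⟩

/-- The zero locus of a polynomial in the torus. -/
def torusZeroLocus (f : MvPolynomial (Fin 2) K) : Set (Kˣ × Kˣ) :=
  {g | eval ![(g.1 : K), (g.2 : K)] f = 0}

theorem finite_torusZeroLocus_inter {f g : MvPolynomial (Fin 2) K} (hf : Irreducible f)
    (hfg : ¬f ∣ g) : (torusZeroLocus f ∩ torusZeroLocus g).Finite := by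
  refine (finite_setOf_eval_eq_zero_of_irreducible_of_not_dvd hf hfg).preimage
    (f := fun g : Kˣ × Kˣ => ![(g.1 : K), (g.2 : K)]) fun g _ h _ hgh => ?_
  exact Prod.ext (Units.ext (congrFun hgh 0)) (Units.ext (congrFun hgh 1))

/-- An exponent of a monomial in two variables, as a vector in the character lattice. -/
def exponentVec (i : Fin 2 →₀ ℕ) : ℤ × ℤ := (i 0, i 1)

theorem exponentVec_injective : Function.Injective exponentVec := fun i j h => by
  ext k
  fin_cases k
  · exact Int.ofNat.inj (congrArg Prod.fst h)
  · exact Int.ofNat.inj (congrArg Prod.snd h)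

variable {s : Finset (Fin 2 →₀ ℕ)}

/-- The characters of the monomials with exponents in `s`, divided by the one with exponent `k`. -/
def supportChar (s : Finset (Fin 2 →₀ ℕ)) (k i : s) : Kˣ × Kˣ →* Kˣ :=
  torusChar (exponentVec i - exponentVec k)

theorem supportChar_self (k : s) : (supportChar s k k : Kˣ × Kˣ →* Kˣ) = 1 := by
  rw [supportChar, sub_self, torusChar_zero]

theorem torusZeroLocus_sum_monomial (k : s) (c : s → K) :
    torusZeroLocus (∑ i : s, monomial i (c i)) = zeroSet (supportChar s k) c := by
  ext g
  have heval : eval ![(g.1 : K), (g.2 : K)] (∑ i : s, monomial i (c i)) =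
      (torusChar (exponentVec k) g : Kˣ) * ∑ i, c i * (supportChar s k i g : K) := by
    rw [map_sum, Finset.mul_sum]
    refine Finset.sum_congr rfl fun i _ => ?_
    rw [mul_left_comm, ← Units.val_mul, supportChar, ← torusChar_add, add_sub_cancel,
      eval_monomial, Finsupp.prod_fintype _ _ fun _ => pow_zero _, Fin.prod_univ_two]
    simp only [torusChar_apply, exponentVec, zpow_natCast, Units.val_mul, Units.val_pow_eq_pow_val,
      Matrix.cons_val_zero, Matrix.cons_val_one]
  rw [torusZeroLocus, zeroSet, Set.mem_ofPred_eq, Set.mem_ofPred_eq, heval, mul_eq_zero,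
    or_iff_right (Units.ne_zero _)]

theorem coeff_sum_monomial (c : s → K) (k : s) :
    coeff (k : Fin 2 →₀ ℕ) (∑ i : s, monomial i (c i)) = c k := by
  classical
  simp only [coeff_sum, coeff_monomial, Subtype.coe_inj, Finset.sum_ite_eq', Finset.mem_univ,
    if_true]

theorem sum_monomial_coeff_support (f : MvPolynomial (Fin 2) K) :
    ∑ i : f.support, monomial i (coeff i f) = f := by
  rw [Finset.sum_coe_sort f.support fun i => monomial i (coeff i f), support_sum_monomial_coeff]

theorem torusZeroLocus_eq_zeroSet (f : MvPolynomial (Fin 2) K) (k : f.support) :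
    torusZeroLocus f = zeroSet (supportChar f.support k) fun i : f.support => coeff i f := by
  rw [← torusZeroLocus_sum_monomial, sum_monomial_coeff_support]

theorem isRigid_of_irreducible {f : MvPolynomial (Fin 2) K} (hf : Irreducible f) (k : f.support) :
    IsRigid (supportChar f.support k) k ((coeff k f)⁻¹ • fun i : f.support => coeff i f) := by
  have hne (i : f.support) : coeff i f ≠ 0 := mem_support_iff.1 i.2
  refine ⟨inv_mul_cancel₀ (hne k), fun i => mul_ne_zero (inv_ne_zero (hne k)) (hne i),
    fun d hd hdk => ?_⟩
  rw [zeroSet_smul _ (inv_ne_zero (hne k)), ← torusZeroLocus_eq_zeroSet,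
    ← torusZeroLocus_sum_monomial]
  refine finite_torusZeroLocus_inter hf fun hdvd => hd ?_
  have hdeg : (∑ i : f.support, monomial i (d i)).totalDegree ≤ f.totalDegree :=
    (totalDegree_finsetSum _ _).trans <| Finset.sup_le fun i _ =>
      (totalDegree_monomial_le _ _).trans (le_totalDegree i.2)
  obtain ⟨a, ha⟩ := exists_eq_C_mul_of_dvd_of_totalDegree_le hdvd hdeg
  have hcoeff (i : f.support) : d i = a * coeff i f := by
    rw [← coeff_sum_monomial d i, ha, coeff_C_mul]
  have ha₀ : a = 0 := (mul_eq_zero.1 ((hcoeff k).symm.trans hdk)).resolve_right (hne k)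
  exact funext fun i => by rw [hcoeff, ha₀, zero_mul, Pi.zero_apply]

theorem finite_setOf_sum_mul_zpow_eq_zero {ι : Type*} [Fintype ι] {n : ι → ℤ}
    (hn : Function.Injective n) {c : ι → K} (hc : c ≠ 0) :
    {t : Kˣ | ∑ i, c i * ((t ^ n i : Kˣ) : K) = 0}.Finite := by
  obtain ⟨k, hk⟩ := Function.ne_iff.1 hc
  let L : LaurentPolynomial K := ∑ i, .C (c i) * .T (n i)
  have hL : L ≠ 0 := fun h => hk <| by
    have hcoeff : L.coeff (n k) = c k := by
      classical
      simp only [L, ← LaurentPolynomial.single_eq_C_mul_T, AddMonoidAlgebra.coeff_sum,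
        AddMonoidAlgebra.coeff_single, Finsupp.finsetSum_apply, Finsupp.single_apply, hn.eq_iff,
        Finset.sum_ite_eq', Finset.mem_univ, if_true]
    rw [← hcoeff, h, AddMonoidAlgebra.coeff_zero, Finsupp.zero_apply, Pi.zero_apply]
  obtain ⟨N, q, hq⟩ := L.exists_T_pow
  have hq₀ : q ≠ 0 := by
    rintro rfl
    rw [map_zero] at hq
    exact hL ((LaurentPolynomial.isUnit_T (N : ℤ)).mul_left_eq_zero.1 hq.symm)
  refine ((Polynomial.finite_setOfPred_isRoot hq₀).preimage Units.val_injective.injOn).subset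
    fun t ht => ?_
  have heval : LaurentPolynomial.eval₂ (RingHom.id K) t L = 0 := by
    rw [map_sum]
    simpa only [LaurentPolynomial.eval₂_C_mul_T, RingHom.id_apply] using (show _ = _ from ht)
  have : Polynomial.eval₂ (RingHom.id K) t q = 0 := by
    rw [← LaurentPolynomial.eval₂_toLaurent, hq, map_mul, heval, zero_mul]
  exact this

end PlaneCurves

section FSets

variable {K : Type*} [Field K] {p : ℕ} {Γ : Subgroup (Kˣ × Kˣ)}

theorem IsFrobeniusOrbit.isGrouplessFSet₂ {S : Set (Kˣ × Kˣ)} (hS : IsFrobeniusOrbit p Γ S) :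
    IsGrouplessFSet₂ p Γ S := by
  obtain ⟨hSΓ, m, hm, α₀, α, rfl⟩ := hS
  refine ⟨hSΓ, m, Nat.one_le_iff_ne_zero.2 hm, 1, 1, le_rfl, α₀, fun _ => α, ?_⟩
  ext g
  simp only [Finset.univ_unique, Finset.prod_singleton, one_mul]
  exact ⟨fun ⟨n, h⟩ => ⟨fun _ => n, h.symm⟩, fun ⟨n, h⟩ => ⟨n default, h.symm⟩⟩

theorem IsFrobeniusOrbit.isFSet₂ {S : Set (Kˣ × Kˣ)} (hS : IsFrobeniusOrbit p Γ S) :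
    IsFSet₂ p Γ S :=
  ⟨S, ⊥, hS.isGrouplessFSet₂, bot_le, by
    ext g
    simp only [Subgroup.mem_bot, exists_eq_left, mul_one, exists_eq_right', Set.mem_ofPred_eq]⟩

theorem isFiniteUnionOf_isFSet₂_of_finite {T : Set (Kˣ × Kˣ)} (hT : T.Finite) (hTΓ : T ⊆ Γ) :
    IsFiniteUnionOf (IsFSet₂ p Γ) T :=
  .of_finite hT fun _ hx => (isFrobeniusOrbit_singleton (hTΓ hx)).isFSet₂

theorem isFSet₂_setOf_mul_mem {B : Subgroup (Kˣ × Kˣ)} (hB : B ≤ Γ) {g₀ : Kˣ × Kˣ} (hg₀ : g₀ ∈ Γ) :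
    IsFSet₂ p Γ {g | g₀⁻¹ * g ∈ B} := by
  refine ⟨{g₀}, B, (isFrobeniusOrbit_singleton hg₀).isGrouplessFSet₂, hB, ?_⟩
  ext g
  simp only [Set.mem_singleton_iff, exists_eq_left]
  exact ⟨fun h => ⟨_, h, (mul_inv_cancel_left g₀ g).symm⟩, fun ⟨b, hb, h⟩ => by simpa [h] using hb⟩

theorem isFiniteUnionOf_isFSet₂_preimage_inter {A : Type*} [Group A] (ψ : Kˣ × Kˣ →* A) {T : Set A}
    (hT : T.Finite) : IsFiniteUnionOf (IsFSet₂ p Γ) (ψ ⁻¹' T ∩ Γ) := by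
  have hcover : ψ ⁻¹' T ∩ Γ = ⋃ t ∈ T ∩ ψ '' Γ, {g ∈ Γ | ψ g = t} := by
    ext g
    simp only [Set.mem_iUnion, exists_prop]
    constructor
    · exact fun ⟨ht, hg⟩ => ⟨ψ g, ⟨ht, g, hg, rfl⟩, hg, rfl⟩
    · rintro ⟨_, ⟨ht, -⟩, hg, rfl⟩
      exact ⟨ht, hg⟩
  rw [hcover]
  refine .biUnion (hT.inter_of_left _) ?_
  rintro _ ⟨-, g₀, hg₀, rfl⟩
  have hcoset : {g ∈ Γ | ψ g = ψ g₀} = {g | g₀⁻¹ * g ∈ Γ ⊓ ψ.ker} := by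
    ext g
    rw [Set.mem_ofPred_eq, Set.mem_ofPred_eq, Subgroup.mem_inf, MonoidHom.mem_ker, map_mul, map_inv,
      inv_mul_eq_one, eq_comm, Γ.mul_mem_cancel_left (Γ.inv_mem hg₀)]
  exact hcoset ▸ .single (isFSet₂_setOf_mul_mem inf_le_left hg₀)

open MvPolynomial

theorem isFiniteUnionOf_isFSet₂_of_exponentVec_det_eq_zero {f : MvPolynomial (Fin 2) K}
    (k : f.support) (hdet : ∀ v ∈ Set.range fun i : f.support => exponentVec i - exponentVec k,
      ∀ w ∈ Set.range fun i : f.support => exponentVec i - exponentVec k,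
        v.1 * w.2 - v.2 * w.1 = 0) :
    IsFiniteUnionOf (IsFSet₂ p Γ) (torusZeroLocus f ∩ Γ) := by
  obtain ⟨w, hw⟩ := exists_forall_exists_eq_zsmul_of_det_eq_zero hdet
  choose n hn using fun i => hw _ (Set.mem_range_self i)
  have hn_inj : Function.Injective n := fun i j hij => Subtype.ext <| exponentVec_injective <|
    sub_left_injective ((hn i).trans (hij ▸ (hn j).symm))
  have hfin := finite_setOf_sum_mul_zpow_eq_zero (c := fun i : f.support => coeff i f) hn_inj
    (Function.ne_iff.2 ⟨k, mem_support_iff.1 k.2⟩)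
  convert! isFiniteUnionOf_isFSet₂_preimage_inter (Γ := Γ) (p := p) (torusChar w) hfin using 2
  rw [torusZeroLocus_eq_zeroSet f k]
  simp only [zeroSet, supportChar, hn, torusChar_zsmul, Set.preimage_ofPred_eq]

theorem units_pow_surjective [IsAlgClosed K] {n : ℕ} (hn : n ≠ 0) :
    Function.Surjective fun u : Kˣ => u ^ n := fun u => by
  obtain ⟨z, hz⟩ := IsAlgClosed.exists_pow_nat_eq (u : K) (Nat.pos_of_ne_zero hn)
  have hz₀ : z ≠ 0 := fun h => u.ne_zero (by rw [← hz, h, zero_pow hn])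
  exact ⟨Units.mk0 z hz₀, Units.ext hz⟩

variable [IsAlgClosed K] [Fact p.Prime] [CharP K p]

theorem isFiniteUnionOf_isFSet₂_of_exponentVec_det_ne_zero (hΓ : Γ.FG)
    {f : MvPolynomial (Fin 2) K} (hf : Irreducible f) (k i j : f.support)
    (hdet : (exponentVec i - exponentVec k).1 * (exponentVec j - exponentVec k).2 -
      (exponentVec i - exponentVec k).2 * (exponentVec j - exponentVec k).1 ≠ 0) :
    IsFiniteUnionOf (IsFSet₂ p Γ) (torusZeroLocus f ∩ Γ) := by
  have hpow : Function.Injective fun x : Kˣ × Kˣ => x ^ p :=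
    (units_pow_char_injective K p).prodMap (units_pow_char_injective K p)
  have hdiv (n : ℕ) (hn : n ≠ 0) : Function.Surjective fun x : Kˣ × Kˣ => x ^ n :=
    (units_pow_surjective hn).prodMap (units_pow_surjective hn)
  rw [torusZeroLocus_eq_zeroSet f k, ← zeroSet_smul _ (inv_ne_zero (mem_support_iff.1 k.2))]
  refine IsFiniteUnionOf.mono ?_ fun S hS => IsFrobeniusOrbit.isFSet₂ hS
  exact (isRigid_of_irreducible hf k).isFiniteUnionOf_isFrobeniusOrbit hdiv hpow
    (supportChar_self k) (fun g hg => isOfFinOrder_of_torusChar_eq_one hdet (hg i) (hg j)) hΓ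

theorem isFiniteUnionOf_isFSet₂_of_irreducible (hΓ : Γ.FG) {f : MvPolynomial (Fin 2) K}
    (hf : Irreducible f) : IsFiniteUnionOf (IsFSet₂ p Γ) (torusZeroLocus f ∩ Γ) := by
  obtain ⟨k, hk⟩ := Finset.nonempty_iff_ne_empty.2 (mt support_eq_empty.1 hf.ne_zero)
  by_cases hdet : ∀ i j : f.support,
      (exponentVec i - exponentVec k).1 * (exponentVec j - exponentVec k).2 -
        (exponentVec i - exponentVec k).2 * (exponentVec j - exponentVec k).1 = 0
  · refine isFiniteUnionOf_isFSet₂_of_exponentVec_det_eq_zero ⟨k, hk⟩ ?_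
    rintro _ ⟨i, rfl⟩ _ ⟨j, rfl⟩
    exact hdet i j
  · push Not at hdet
    obtain ⟨i, j, hij⟩ := hdet
    exact isFiniteUnionOf_isFSet₂_of_exponentVec_det_ne_zero hΓ hf ⟨k, hk⟩ i j hij

end FSets

section Subvarieties

open MvPolynomial

variable {K : Type*} [Field K] {X : Set (Kˣ × Kˣ)}

theorem torusZeroLocus_subset_or_finite_inter (hX : IsTorusSubvariety₂ K X)
    {f : MvPolynomial (Fin 2) K} (hf : Irreducible f) :
    torusZeroLocus f ⊆ X ∨ (torusZeroLocus f ∩ X).Finite := by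
  obtain ⟨𝒮, rfl⟩ := hX
  by_cases hdvd : ∀ g ∈ 𝒮, f ∣ g
  · refine Or.inl fun x hx g hg => ?_
    obtain ⟨h, rfl⟩ := hdvd g hg
    rw [map_mul, show eval _ f = 0 from hx, zero_mul]
  · push Not at hdvd
    obtain ⟨g, hg, hfg⟩ := hdvd
    exact Or.inr ((finite_torusZeroLocus_inter hf hfg).subset fun x hx => ⟨hx.1, hx.2 g hg⟩)

theorem exists_finite_irreducible_subset_biUnion_torusZeroLocus (hX : IsTorusSubvariety₂ K X)
    (hXne : X ≠ Set.univ) : ∃ s : Set (MvPolynomial (Fin 2) K), s.Finite ∧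
      (∀ f ∈ s, Irreducible f) ∧ X ⊆ ⋃ f ∈ s, torusZeroLocus f := by
  obtain ⟨𝒮, rfl⟩ := hX
  obtain ⟨f, hf, hf₀⟩ : ∃ f ∈ 𝒮, f ≠ 0 := by
    by_contra! hzero
    exact hXne (Set.eq_univ_of_forall fun x f hf => by rw [hzero f hf, map_zero])
  obtain ⟨s, hs, u, hu⟩ := WfDvdMonoid.exists_factors f hf₀
  refine ⟨{h | h ∈ s}, Multiset.finite_toSet s, hs, fun x hx => ?_⟩
  have hxf := hx f hf
  rw [← hu, map_mul, mul_eq_zero, or_iff_left (u.isUnit.map _).ne_zero, map_multiset_prod,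
    Multiset.prod_eq_zero_iff, Multiset.mem_map] at hxf
  obtain ⟨h, hh, hxh⟩ := hxf
  exact Set.mem_iUnion₂.2 ⟨h, hh, hxh⟩

end Subvarieties

/-- Theorem on curves (torus case): over an algebraically closed field `K` of
characteristic `p > 0`, the intersection of a proper subvariety `X ⊊ (Kˣ)²` with a
finitely generated subgroup `Γ` of `(Kˣ)²` is a finite union of `F`-sets in `Γ`. -/
theorem proper_subvariety_of_torus_squared_intersection_F_sets
    (K : Type*) [Field K] [IsAlgClosed K] (p : ℕ) (hp : p.Prime) [CharP K p]
    (X : Set (Kˣ × Kˣ)) (hX : IsTorusSubvariety₂ K X) (hXne : X ≠ Set.univ)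
    (Γ : Subgroup (Kˣ × Kˣ)) (hΓ : Γ.FG) :
    ∃ (n : ℕ) (Ts : Fin n → Set (Kˣ × Kˣ)),
      (∀ i, IsFSet₂ p Γ (Ts i)) ∧ X ∩ ↑Γ = ⋃ i, Ts i := by
  have : Fact p.Prime := ⟨hp⟩
  obtain ⟨s, hs, hirr, hXs⟩ := exists_finite_irreducible_subset_biUnion_torusZeroLocus hX hXne
  have hcover : X ∩ Γ = ⋃ f ∈ s, torusZeroLocus f ∩ X ∩ Γ := by
    rw [← Set.iUnion₂_inter, ← Set.iUnion₂_inter, Set.inter_eq_right.2 hXs]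
  refine IsFiniteUnionOf.exists_fin (hcover ▸ .biUnion hs fun f hf => ?_)
  obtain hsub | hfin := torusZeroLocus_subset_or_finite_inter hX (hirr f hf)
  · rw [Set.inter_eq_left.2 hsub]
    exact isFiniteUnionOf_isFSet₂_of_irreducible hΓ (hirr f hf)
  · exact isFiniteUnionOf_isFSet₂_of_finite (hfin.inter_of_left _) Set.inter_subset_right
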